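/- Let 0 < m ≤ 1. There exists a constant c = c(m) > 0 such that for all u, a, ψ ∈ ℝ with ψ ≤ u one has |u − a| (ψ^m − a^m)_+ ≤ (1/2) 𝔟[u^m, a^m] + c |ψ^((1+m)/2) − a^((1+m)/2)|², where 𝔟[u^m, a^m] := (m/(1+m))(|a|^(1+m) − |u|^(1+m)) − u (a^m − u^m). -/

import Mathlib

/-!
The function `u ↦ bterm m u a` is the primitive of `s ↦ s^m - a^m` vanishing at `a`, so it is a
Bregman-type divergence: it is nonnegative (Young's inequality, `bterm_nonneg`) and satisfies the
three-point identity
`bterm m u a = bterm m u θ + bterm m θ a + (u - θ) (θ^m - a^m)` (`bterm_three_point`).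

When `ψ^m ≤ a^m` the left-hand side vanishes. Otherwise `a ≤ ψ ≤ u`, and choosing `θ` with
`θ^m - a^m = 2 (ψ^m - a^m)` gives
`(u - a) (ψ^m - a^m) ≤ (1/2) bterm m u a + (θ - a) (ψ^m - a^m)`.
The last term does not involve `u`. With `x = a^m`, `y = ψ^m`, `p = 1/m ≥ 1` and `q = (p + 1)/2` it
equals `((2y - x)^p - x^p) (y - x)`, and for `M = max |x| |y|` it is bounded by a multiple of
`M^(p-1) (y - x)²` (`spow_sub_le`). As `p - 1 = 2 (q - 1)`, this is in turn bounded by a multiple of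
`(y^q - x^q)²` (`exists_lower`), and `y^q = ψ^((1+m)/2)`, `x^q = a^((1+m)/2)`.
-/

/-- Signed power: `a^k := |a|^(k-1) a`. -/
noncomputable def spow (a k : ℝ) : ℝ := |a| ^ (k - 1) * a

/-- The boundary term `𝔟[u^m, a^m]`. -/
noncomputable def bterm (m u a : ℝ) : ℝ :=
  m / (1 + m) * (|a| ^ (1 + m) - |u| ^ (1 + m)) - u * (spow a m - spow u m)

lemma spow_of_nonneg {x k : ℝ} (hx : 0 ≤ x) (hk : 0 < k) : spow x k = x ^ k := by
  unfold spow
  rcases hx.eq_or_lt with rfl | h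
  · simp [Real.zero_rpow hk.ne']
  · rw [abs_of_pos h, Real.rpow_sub_one h.ne']
    field_simp

lemma spow_neg (x k : ℝ) : spow (-x) k = -spow x k := by
  simp [spow]

lemma spow_spow (a : ℝ) {k l : ℝ} (hk : 0 < k) (hl : 0 < l) :
    spow (spow a k) l = spow a (k * l) := by
  have key : ∀ b : ℝ, 0 ≤ b → spow (spow b k) l = spow b (k * l) := by
    intro b hb
    rw [spow_of_nonneg hb hk, spow_of_nonneg (Real.rpow_nonneg hb k) hl,
      spow_of_nonneg hb (mul_pos hk hl), Real.rpow_mul hb]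
  rcases le_total 0 a with h | h
  · exact key a h
  · have := key (-a) (by linarith)
    simp only [spow_neg] at this
    linarith

lemma spow_one (a : ℝ) : spow a 1 = a := by simp [spow]

lemma abs_spow (a : ℝ) {k : ℝ} (hk : 0 < k) : |spow a k| = |a| ^ k := by
  rw [← spow_of_nonneg (abs_nonneg a) hk]
  simp [spow, abs_mul, abs_of_nonneg (Real.rpow_nonneg (abs_nonneg a) (k - 1))]

lemma abs_rpow_eq_mul_spow (a : ℝ) {m : ℝ} (hm : 0 < m) : |a| ^ (1 + m) = a * spow a m := by
  rw [← spow_of_nonneg (abs_nonneg a) (by linarith)]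
  unfold spow
  rw [abs_abs]
  rcases eq_or_ne a 0 with rfl | h
  · simp
  · have h' : 0 < |a| := abs_pos.mpr h
    rw [show 1 + m - 1 = (m - 1) + 1 by ring, Real.rpow_add_one h'.ne']
    have := abs_mul_abs_self a
    linear_combination (|a| ^ (m - 1)) * this

lemma bterm_nonneg {m : ℝ} (hm : 0 < m) (u a : ℝ) : 0 ≤ bterm m u a := by
  have hpq : (1 + m).HolderConjugate ((1 + m) / m) := by
    rw [Real.holderConjugate_iff]
    refine ⟨by linarith, ?_⟩
    field_simp
  have h := Real.young_inequality u (spow a m) hpq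
  rw [abs_spow a hm, ← Real.rpow_mul (abs_nonneg a),
    show m * ((1 + m) / m) = 1 + m by field_simp] at h
  have hu := abs_rpow_eq_mul_spow u hm
  unfold bterm
  have e : m / (1 + m) * (|a| ^ (1 + m) - |u| ^ (1 + m)) - u * (spow a m - spow u m)
      = |u| ^ (1 + m) / (1 + m) + |a| ^ (1 + m) / ((1 + m) / m) - u * spow a m := by
    rw [mul_sub u, ← hu]
    field_simp
    ring
  rw [e]
  linarith

lemma bterm_three_point (m u θ a : ℝ) :
    bterm m u a = bterm m u θ + bterm m θ a + (u - θ) * (spow θ m - spow a m) := by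
  unfold bterm
  ring

/-- Tangent-line bound for `t ↦ t ^ p` on the nonnegative axis, from Bernoulli's inequality. -/
lemma rpow_sub_le {p x z N : ℝ} (hp : 1 ≤ p) (hx : 0 ≤ x) (hxz : x ≤ z) (hz : z ≤ N) :
    z ^ p - x ^ p ≤ p * N ^ (p - 1) * (z - x) := by
  rcases (hx.trans hxz).eq_or_lt with h0 | h0
  · have : x = z := by linarith
    subst this
    simp
  have hb := one_add_mul_self_le_rpow_one_add (s := x / z - 1)
    (by have := div_nonneg hx h0.le; linarith) hp
  rw [add_sub_cancel, Real.div_rpow hx h0.le, le_div_iff₀ (Real.rpow_pos_of_pos h0 p)] at hb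
  have hzp : z ^ p = z ^ (p - 1) * z := by
    rw [Real.rpow_sub_one h0.ne']
    field_simp
  have h1 : z ^ p - x ^ p ≤ p * z ^ (p - 1) * (z - x) := by
    have : (1 + p * (x / z - 1)) * z ^ p = z ^ p - p * z ^ (p - 1) * (z - x) := by
      rw [hzp]
      field_simp
      ring
    linarith
  refine h1.trans ?_
  have : z ^ (p - 1) ≤ N ^ (p - 1) := Real.rpow_le_rpow h0.le hz (by linarith)
  have h2 : 0 ≤ z - x := by linarith
  gcongr

lemma spow_sub_le {p x z N : ℝ} (hp : 1 ≤ p) (hxz : x ≤ z) (hx : |x| ≤ N) (hz : |z| ≤ N) :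
    spow z p - spow x p ≤ p * N ^ (p - 1) * (z - x) := by
  have hp0 : 0 < p := by linarith
  obtain ⟨hx1, hx2⟩ := abs_le.mp hx
  obtain ⟨hz1, hz2⟩ := abs_le.mp hz
  rcases le_total 0 x with h | h
  · rw [spow_of_nonneg h hp0, spow_of_nonneg (h.trans hxz) hp0]
    exact rpow_sub_le hp h hxz hz2
  · have ex : spow x p = -(-x) ^ p := by
      rw [← spow_of_nonneg (by linarith) hp0, spow_neg, neg_neg]
    rcases le_total 0 z with h' | h'
    · -- The two tangent bounds on `[0, z]` and `[0, -x]` add up.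
      have a1 := rpow_sub_le hp le_rfl h' hz2
      have a2 := rpow_sub_le hp le_rfl (by linarith : 0 ≤ -x) (by linarith : -x ≤ N)
      rw [Real.zero_rpow hp0.ne'] at a1 a2
      rw [ex, spow_of_nonneg h' hp0]
      linarith
    · have ez : spow z p = -(-z) ^ p := by
        rw [← spow_of_nonneg (by linarith) hp0, spow_neg, neg_neg]
      have a1 := rpow_sub_le hp (by linarith : 0 ≤ -z) (by linarith : -z ≤ -x)
        (by linarith : -x ≤ N)
      rw [ex, ez]
      linarith

lemma lower_of_abs_le {q x y : ℝ} (hq : 1 ≤ q) (h : |x| ≤ y) :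
    y ^ (q - 1) * (y - x) ≤ 2 * (spow y q - spow x q) := by
  have hq0 : 0 < q := by linarith
  have hy : 0 ≤ y := (abs_nonneg x).trans h
  obtain ⟨hx1, hx2⟩ := abs_le.mp h
  have hyq : 0 ≤ y ^ (q - 1) := Real.rpow_nonneg hy _
  have e : spow y q = y ^ (q - 1) * y := by simp [spow, abs_of_nonneg hy]
  have hle : |x| ^ (q - 1) ≤ y ^ (q - 1) := Real.rpow_le_rpow (abs_nonneg x) h (by linarith)
  have hx0 : 0 ≤ |x| ^ (q - 1) := Real.rpow_nonneg (abs_nonneg x) _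
  rw [e]
  unfold spow
  rcases le_total 0 x with h0 | h0
  · have := mul_le_mul_of_nonneg_right hle h0
    have := mul_nonneg hyq (sub_nonneg.mpr hx2)
    linarith
  · have := mul_nonneg hx0 (neg_nonneg.mpr h0)
    have := mul_nonneg hyq (by linarith : 0 ≤ y + x)
    linarith

/-- The witness is `M = max |x| |y|`, which for `x ≤ y` is `y` or `-x`. -/
lemma exists_lower {q x y : ℝ} (hq : 1 ≤ q) (hxy : x ≤ y) :
    ∃ M : ℝ, |x| ≤ M ∧ |y| ≤ M ∧ M ^ (q - 1) * (y - x) ≤ 2 * (spow y q - spow x q) := by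
  rcases le_total (-x) y with h | h
  · have h1 : |x| ≤ y := abs_le.mpr ⟨by linarith, hxy⟩
    exact ⟨y, h1, (abs_of_nonneg ((abs_nonneg x).trans h1)).le, lower_of_abs_le hq h1⟩
  · have h1 : |-y| ≤ -x := abs_le.mpr ⟨by linarith, by linarith⟩
    have h2 := lower_of_abs_le hq h1
    simp only [spow_neg] at h2
    rw [abs_neg] at h1
    refine ⟨-x, ?_, h1, by linarith⟩
    rw [abs_of_nonpos (by linarith [(abs_nonneg y).trans h1])]

lemma spow_mono {q x y : ℝ} (hq : 1 ≤ q) (hxy : x ≤ y) : spow x q ≤ spow y q := by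
  obtain ⟨M, h1, -, h2⟩ := exists_lower hq hxy
  have := mul_nonneg (Real.rpow_nonneg ((abs_nonneg x).trans h1) (q - 1)) (sub_nonneg.mpr hxy)
  linarith

/-- The estimate of the `u`-independent remainder, in the variables `x = a^m`, `y = ψ^m`,
`p = 1/m`; here `2y - x = θ^m`. -/
lemma remainder_le {p x y : ℝ} (hp : 1 ≤ p) (hxy : x ≤ y) :
    (spow (2 * y - x) p - spow x p) * (y - x) ≤
      8 * p * 3 ^ (p - 1) * (spow y ((p + 1) / 2) - spow x ((p + 1) / 2)) ^ 2 := by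
  obtain ⟨M, hx, hy, hM⟩ := exists_lower (q := (p + 1) / 2) (by linarith) hxy
  have hM0 : 0 ≤ M := (abs_nonneg x).trans hx
  have hd : 0 ≤ y - x := sub_nonneg.mpr hxy
  obtain ⟨hx1, hx2⟩ := abs_le.mp hx
  obtain ⟨hy1, hy2⟩ := abs_le.mp hy
  have h1 := spow_sub_le (N := 3 * M) (x := x) (z := 2 * y - x) hp (by linarith) (by linarith)
    (abs_le.mpr ⟨by linarith, by linarith⟩)
  rw [Real.mul_rpow (by norm_num) hM0] at h1
  have h2 : M ^ (p - 1) = (M ^ ((p + 1) / 2 - 1)) ^ 2 := by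
    rw [← Real.rpow_natCast, ← Real.rpow_mul hM0]
    congr 1
    push_cast
    ring
  have h3 := pow_le_pow_left₀ (mul_nonneg (Real.rpow_nonneg hM0 _) hd) hM 2
  have hc : 0 ≤ 2 * p * (3 : ℝ) ^ (p - 1) := by positivity
  calc (spow (2 * y - x) p - spow x p) * (y - x)
      ≤ p * (3 ^ (p - 1) * M ^ (p - 1)) * (2 * y - x - x) * (y - x) :=
        mul_le_mul_of_nonneg_right h1 hd
    _ = 2 * p * 3 ^ (p - 1) * (M ^ ((p + 1) / 2 - 1) * (y - x)) ^ 2 := by rw [h2]; ring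
    _ ≤ 2 * p * 3 ^ (p - 1) * (2 * (spow y ((p + 1) / 2) - spow x ((p + 1) / 2))) ^ 2 :=
        mul_le_mul_of_nonneg_left h3 hc
    _ = _ := by ring

/-- For `0 < m ≤ 1` there is `c = c(m) > 0` such that for all `u, a, ψ ∈ ℝ` with `ψ ≤ u`:
`|u − a| (ψ^m − a^m)_+ ≤ (1/2) 𝔟[u^m, a^m] + c |ψ^((1+m)/2) − a^((1+m)/2)|²`. -/
theorem obstacle_difference_absorption (m : ℝ) (hm0 : 0 < m) (hm1 : m ≤ 1) :
    ∃ c : ℝ, 0 < c ∧ ∀ u a ψ : ℝ, ψ ≤ u →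
      |u - a| * max (spow ψ m - spow a m) 0 ≤
        (1 / 2) * bterm m u a +
          c * |spow ψ ((1 + m) / 2) - spow a ((1 + m) / 2)| ^ 2 := by
  have hp : 1 ≤ 1 / m := by rw [le_div_iff₀ hm0]; linarith
  have hp0 : 0 < 1 / m := by positivity
  refine ⟨8 * (1 / m) * 3 ^ (1 / m - 1), by positivity, ?_⟩
  intro u a ψ hu
  rcases le_total (spow ψ m) (spow a m) with h | h
  · rw [max_eq_right (by linarith), mul_zero]
    have := bterm_nonneg hm0 u a
    positivity
  have inv : ∀ b : ℝ, spow (spow b m) (1 / m) = b := by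
    intro b
    rw [spow_spow b hm0 hp0, mul_one_div_cancel hm0.ne', spow_one]
  have half : ∀ b : ℝ, spow (spow b m) ((1 / m + 1) / 2) = spow b ((1 + m) / 2) := by
    intro b
    rw [spow_spow b hm0 (by linarith)]
    congr 1
    field_simp
  have haψ : a ≤ ψ := by
    have := spow_mono hp h
    rwa [inv, inv] at this
  have hr := remainder_le hp h
  rw [half, half, inv] at hr
  obtain ⟨θ, hθ⟩ : ∃ θ, θ = spow (2 * spow ψ m - spow a m) (1 / m) := ⟨_, rfl⟩
  have hθm : spow θ m = 2 * spow ψ m - spow a m := by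
    rw [hθ, spow_spow _ hp0 hm0, one_div_mul_cancel hm0.ne', spow_one]
  rw [← hθ] at hr
  have h3 := bterm_three_point m u θ a
  have n1 := bterm_nonneg hm0 u θ
  have n2 := bterm_nonneg hm0 θ a
  rw [max_eq_left (by linarith), abs_of_nonneg (by linarith : 0 ≤ u - a), sq_abs]
  rw [hθm] at h3
  nlinarith
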